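/- For every n ≥ 1 and every x ∈ ℂ, the expectation of Z_n(x) over the uniform measure on S_n equals 1 − x; that is, (1/n!)·∑_{σ∈S_n} det(I − x·g(σ)) = 1 − x. -/

import Mathlib

open scoped BigOperators

/-- The permutation matrix `g(σ) = (δ_{i,σ(j)})`. -/
noncomputable def permMat (n : ℕ) (σ : Equiv.Perm (Fin n)) : Matrix (Fin n) (Fin n) ℂ :=
  Matrix.of fun i j => if i = σ j then (1 : ℂ) else 0

noncomputable def auxF (n : ℕ) (A : Finset (Fin n)) (σ : Equiv.Perm (Fin n)) : ℂ :=
  (Matrix.detRowAlternating (R := ℂ) (n := Fin n))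
    (A.piecewise (fun i => Pi.single (σ i) (1 : ℂ)) (fun i => Pi.single i (1 : ℂ)))

lemma aux_expand (n : ℕ) (σ : Equiv.Perm (Fin n)) (x : ℂ) :
    Matrix.det (1 - x • permMat n σ) = ∑ A : Finset (Fin n), (-x) ^ A.card * auxF n A σ := by
  rw [← Matrix.det_transpose]
  have h : (1 - x • permMat n σ).transpose =
      (fun i => (-x) • (Pi.single (σ i) (1 : ℂ) : Fin n → ℂ)) +
        (fun i => (Pi.single i (1 : ℂ) : Fin n → ℂ)) := by
    ext i j
    simp [permMat, Matrix.one_apply, Pi.single_apply]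
    ring
  rw [h]
  change (Matrix.detRowAlternating (R := ℂ) (n := Fin n)).toMultilinearMap _ = _
  rw [MultilinearMap.map_add_univ]
  refine Finset.sum_congr rfl fun A _ => ?_
  have h2 := (Matrix.detRowAlternating (R := ℂ) (n := Fin n)).toMultilinearMap.map_piecewise_smul
    (fun _ => -x) (A.piecewise (fun i => (Pi.single (σ i) (1 : ℂ) : Fin n → ℂ))
      (fun i => Pi.single i (1 : ℂ))) A
  rw [Finset.prod_const, smul_eq_mul] at h2
  refine Eq.trans ?_ h2
  congr 1
  ext i j
  by_cases hi : i ∈ A <;> simp [hi]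

lemma aux_big (n : ℕ) (A : Finset (Fin n)) (hA : 1 < A.card) :
    ∑ σ : Equiv.Perm (Fin n), auxF n A σ = 0 := by
  obtain ⟨a, ha, b, hb, hab⟩ := Finset.one_lt_card.mp hA
  have h1 : ∀ σ : Equiv.Perm (Fin n), auxF n A (σ * Equiv.swap a b) = - auxF n A σ := by
    intro σ
    unfold auxF
    rw [← AlternatingMap.map_swap _ _ hab]
    congr 1
    funext i
    by_cases hia : i = a
    · subst hia; simp [ha, hb]
    by_cases hib : i = b
    · subst hib; simp [ha, hb]
    simp only [Function.comp, Equiv.swap_apply_of_ne_of_ne hia hib, Finset.piecewise,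
      Equiv.Perm.mul_apply]
  have h2 : ∑ σ : Equiv.Perm (Fin n), auxF n A σ = - ∑ σ : Equiv.Perm (Fin n), auxF n A σ := by
    rw [← Finset.sum_neg_distrib, ← Equiv.sum_comp (Equiv.mulRight (Equiv.swap a b))]
    exact Finset.sum_congr rfl fun σ _ => h1 σ
  exact self_eq_neg.mp h2

lemma aux_empty (n : ℕ) (σ : Equiv.Perm (Fin n)) : auxF n ∅ σ = 1 := by
  unfold auxF
  rw [Finset.piecewise_empty]
  refine Eq.trans ?_ (Matrix.det_one (n := Fin n) (R := ℂ))
  change Matrix.det _ = _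
  congr 1
  ext i j
  simp [Matrix.one_apply, Pi.single_apply, eq_comm]

lemma aux_single (n : ℕ) (a : Fin n) (σ : Equiv.Perm (Fin n)) :
    auxF n {a} σ = if σ a = a then 1 else 0 := by
  unfold auxF
  rw [Finset.piecewise_singleton]
  have h : (fun i => Pi.single i (1 : ℂ) : Fin n → Fin n → ℂ) = (1 : Matrix (Fin n) (Fin n) ℂ) := by
    ext i j
    simp [Matrix.one_apply, Pi.single_apply, eq_comm]
  rw [h]
  change Matrix.det (Matrix.updateRow 1 a _) = _
  rw [← Matrix.cramer_transpose_apply, Matrix.transpose_one, Matrix.cramer_one]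
  simp [Pi.single_apply, eq_comm]

lemma aux_count (n : ℕ) (a : Fin n) :
    (n : ℂ) * ∑ σ : Equiv.Perm (Fin n), (if σ a = a then (1 : ℂ) else 0) = n.factorial := by
  have h : ∀ b : Fin n, ∑ σ : Equiv.Perm (Fin n), (if σ a = a then (1 : ℂ) else 0)
      = ∑ σ : Equiv.Perm (Fin n), (if σ a = b then (1 : ℂ) else 0) := by
    intro b
    rw [← Equiv.sum_comp (Equiv.mulLeft (Equiv.swap a b))]
    refine Finset.sum_congr rfl fun σ _ => ?_
    have : (Equiv.swap a b) (σ a) = a ↔ σ a = b := by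
      rw [Equiv.swap_apply_eq_iff, Equiv.swap_apply_left]
    simp [this]
  calc _ = ∑ b : Fin n, ∑ σ : Equiv.Perm (Fin n), (if σ a = a then (1 : ℂ) else 0) := by simp
    _ = ∑ b : Fin n, ∑ σ : Equiv.Perm (Fin n), (if σ a = b then (1 : ℂ) else 0) :=
      Finset.sum_congr rfl fun b _ => h b
    _ = _ := by
      rw [Finset.sum_comm]
      simp [Fintype.card_perm]

/-- Corollary 2.11: for every `n ≥ 1` and `x ∈ ℂ`,
`E[Z_n(x)] = (1/n!) ∑_{σ ∈ S_n} det(I - x·g(σ)) = 1 - x`. -/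
theorem expectation_Z_eq_one_sub (n : ℕ) (hn : 1 ≤ n) (x : ℂ) :
    (1 / (n.factorial : ℂ)) *
        ∑ σ : Equiv.Perm (Fin n), Matrix.det (1 - x • permMat n σ) = 1 - x := by
  have hf : (n.factorial : ℂ) ≠ 0 := by exact_mod_cast n.factorial_ne_zero
  have hn0 : (n : ℂ) ≠ 0 := by exact_mod_cast (by omega : n ≠ 0)
  have key : ∑ σ : Equiv.Perm (Fin n), Matrix.det (1 - x • permMat n σ)
      = n.factorial * (1 - x) := by
    simp_rw [aux_expand]
    rw [Finset.sum_comm]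
    simp_rw [← Finset.mul_sum]
    have hsub : insert ∅ (Finset.univ.image (fun a : Fin n => ({a} : Finset (Fin n)))) ⊆
      (Finset.univ : Finset (Finset (Fin n))) := Finset.subset_univ _
    rw [← Finset.sum_subset hsub, Finset.sum_insert, Finset.sum_image]
    · have h1 : ∀ a : Fin n, ∑ σ : Equiv.Perm (Fin n), auxF n {a} σ = n.factorial / n := by
        intro a
        simp_rw [aux_single]
        rw [eq_div_iff hn0, mul_comm, aux_count]
      simp_rw [h1, aux_empty]
      simp [Fintype.card_perm]
      field_simp
      ring
    · intro a _ b _ h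
      simpa using h
    · simp
    · intro A _ hA
      rw [aux_big, mul_zero]
      by_contra hc
      apply hA
      rcases Nat.le_one_iff_eq_zero_or_eq_one.mp (not_lt.mp hc) with h | h
      · simp [Finset.card_eq_zero.mp h]
      · obtain ⟨a, rfl⟩ := Finset.card_eq_one.mp h
        simp
  rw [key]
  field_simp
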